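/- Decay estimates: there is an absolute constant C such that for every t > 0 and every real-valued tempered distribution u whose profile ũ(p) = e^{−itp³} û(p) satisfies ũ ∈ L^∞(ℝ) and ∂_p ũ ∈ L²((0, ∞)), the function u is continuous and for all x ∈ ℝ: |u(x)| ≤ C t^{−1/3} ⟨|x|/t^{1/3}⟩^{−1/4} ‖u‖_{E(t)} and |∂ₓ u(x)| ≤ C t^{−2/3} ⟨|x|/t^{1/3}⟩^{1/4} ‖u‖_{E(t)}, where ‖u‖_{E(t)} = ‖ũ‖_{L^∞} + t^{−1/6} ‖∂_p ũ‖_{L²((0,∞))}. -/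

import Mathlib

open MeasureTheory Set Filter Topology

noncomputable section

namespace MKdVPaper

/-- The Japanese bracket `⟨y⟩ = √(1+y²)`. -/
def jap (y : ℝ) : ℝ := Real.sqrt (1 + y ^ 2)

/-- Truncated Fourier-type integral recovering the physical function from a profile `w`:
`(1/π) Re ∫_0^R e^{i(px + p³ t)} w(p) dp`. -/
def physPartial (w : ℝ → ℂ) (t x R : ℝ) : ℝ :=
  (1 / Real.pi) *
    (∫ p in Ioc (0 : ℝ) R, Complex.exp (Complex.I * ((p * x + p ^ 3 * t : ℝ) : ℂ)) * w p).re

/-- `u` is the physical-space function associated with the profile `w` at time `t`, i.e.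
`u(x) = (1/π) Re ∫_0^∞ e^{i(px + p³t)} w(p) dp` as an improper integral. -/
def IsPhys (w : ℝ → ℂ) (t : ℝ) (u : ℝ → ℝ) : Prop :=
  ∀ x : ℝ, Tendsto (fun R => physPartial w t x R) atTop (𝓝 (u x))

/-- Sup norm of a profile. -/
def supN (w : ℝ → ℂ) : ℝ := ⨆ p : ℝ, ‖w p‖

/-- `L²((0,∞))` norm of the derivative of the profile. -/
def dL2 (w : ℝ → ℂ) : ℝ := (eLpNorm (deriv w) 2 (volume.restrict (Ioi 0))).toReal

/-- The `E(t)` norm: `‖ũ‖_{L^∞} + t^{-1/6} ‖∂_p ũ‖_{L²((0,∞))}`. -/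
def EnormP (t : ℝ) (w : ℝ → ℂ) : ℝ := supN w + t ^ (-(1 / 6 : ℝ)) * dL2 w

/-- Membership conditions for `E(t)` on the profile side: profile of a real-valued
distribution, bounded and continuous on `(0,∞)`, with derivative in `L²((0,∞))`. -/
structure MemE (w : ℝ → ℂ) : Prop where
  symm : ∀ p : ℝ, w (-p) = starRingEnd ℂ (w p)
  cont : ContinuousOn w (Ioi 0)
  bdd : BddAbove (range fun p : ℝ => ‖w p‖)
  diff : ∀ p ∈ Ioi (0 : ℝ), DifferentiableAt ℝ w p
  derivL2 : MemLp (deriv w) 2 (volume.restrict (Ioi 0))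

/-- A space-time function of class `E(I)`: a physical function `u` together with its
profile `w(t,p) = e^{-itp³} û(t,p)`. -/
structure ESol (I : Set ℝ) where
  u : ℝ → ℝ → ℝ
  w : ℝ → ℝ → ℂ
  memE : ∀ t ∈ I, MemE (w t)
  isPhys : ∀ t ∈ I, IsPhys (w t) t (u t)
  contt : ContinuousOn (fun q : ℝ × ℝ => w q.1 q.2) (I ×ˢ Ioi 0)

/-- Finiteness of the `E(I)` norm: `sup_{t ∈ I} ‖u(t)‖_{E(t)} < ∞`. -/
def FiniteEnorm (I : Set ℝ) (sol : ESol I) : Prop :=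
  BddAbove ((fun t => EnormP t (sol.w t)) '' I)

/-- Time derivative of a test function. -/
def dt1 (φ : ℝ → ℝ → ℝ) : ℝ → ℝ → ℝ := fun t x => deriv (fun s => φ s x) t

/-- Space derivative of a test function. -/
def dx1 (φ : ℝ → ℝ → ℝ) : ℝ → ℝ → ℝ := fun t x => deriv (fun y => φ t y) x

/-- `u` is a distributional solution of `∂ₜ u + ∂ₓ³ u + ε ∂ₓ(u³) = 0` on `I × ℝ`. -/
def IsSolOn (ε : ℝ) (u : ℝ → ℝ → ℝ) (I : Set ℝ) : Prop :=
  ∀ φ : ℝ → ℝ → ℝ,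
    ContDiff ℝ (⊤ : ℕ∞) (fun q : ℝ × ℝ => φ q.1 q.2) →
    HasCompactSupport (fun q : ℝ × ℝ => φ q.1 q.2) →
    tsupport (fun q : ℝ × ℝ => φ q.1 q.2) ⊆ interior I ×ˢ univ →
    (∫ q : ℝ × ℝ,
      (u q.1 q.2 * (dt1 φ q.1 q.2 + dx1 (dx1 (dx1 φ)) q.1 q.2)
        + ε * u q.1 q.2 ^ 3 * dx1 φ q.1 q.2)) = 0

/-- Self-similar solution: `S(t,x) = t^{-1/3} V(t^{-1/3} x)`. -/
def SelfSimilar {I : Set ℝ} (S : ESol I) : Prop :=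
  ∃ V : ℝ → ℝ, ∀ t ∈ I, ∀ x : ℝ,
    S.u t x = t ^ (-(1 / 3 : ℝ)) * V (t ^ (-(1 / 3 : ℝ)) * x)

/-- The Fourier transform at time 1 recovered from the profile: `û(1,p) = e^{ip³} ũ(1,p)`. -/
def hatAtOne (w : ℝ → ℂ) : ℝ → ℂ := fun p => Complex.exp (Complex.I * ((p ^ 3 : ℝ) : ℂ)) * w p

/-- The Fourier transforms at time 1 have the same limit at frequency `0⁺`. -/
def SameZeroLimit (w₁ w₂ : ℝ → ℂ) : Prop :=
  ∃ c : ℂ, Tendsto (hatAtOne w₁) (𝓝[>] (0 : ℝ)) (𝓝 c) ∧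
    Tendsto (hatAtOne w₂) (𝓝[>] (0 : ℝ)) (𝓝 c)

/-- Truncated Airy–Fock integral. -/
def AiP (z R : ℝ) : ℂ :=
  ((1 / Real.pi : ℝ) : ℂ) *
    ∫ p in Ioc (0 : ℝ) R, Complex.exp (Complex.I * ((p * z + p ^ 3 : ℝ) : ℂ))

/-- The Airy–Fock function `Ai(z) = (1/π)∫_0^∞ e^{i(pz+p³)} dp` (improper integral). -/
def AiFock (z : ℝ) : ℂ := limUnder atTop fun R => AiP z R

end MKdVPaper

/-!
Fix an amplitude `m`, to be taken as `1` for `u` and as `p` for `∂ₓu`, and let `a` be the stationary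
point of the phase `px + p³t` and `σ = √(|x|/(3t))`. Since the derivative of the phase is at least
`2t(p + σ)|p - a|`, dividing by it an amplitude with `|m| ≤ μ(p + σ)` and `|∂ₚm| ≤ μ` leaves a
weight of size `(2μ/t)|p - a|⁻¹` whose derivative has size `(2μ/t)|p - a|⁻²`. At distance at least
`d` from `a`, one integration by parts and the Cauchy–Schwarz inequality therefore bound the
oscillatory integral by `(2μ/t)(3A/d + ‖∂ₚw‖/√d)`, where `|w| ≤ A`; closer than `d` the integrand is
estimated by its size. The distance `d = t^{-1/3} ⟨|x|/t^{1/3}⟩^{-1/4}` balances the two for both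
amplitudes.

Letting instead `d → ∞`, the same bound with `m = p` shows that the `x`-derivatives of the truncated
integrals are Cauchy locally uniformly in `x`, which makes `u` differentiable.
-/

namespace MKdVPaper

section PuncturedWeight

variable {a b c d : ℝ}

lemma continuousOn_inv_sub_of_le_abs_sub {s : Set ℝ} (hd : 0 < d) (h : ∀ p ∈ s, d ≤ |p - a|) :
    ContinuousOn (fun p : ℝ => (p - a)⁻¹) s :=
  ContinuousOn.inv₀ (by fun_prop) fun p hp => abs_pos.1 (hd.trans_le (h p hp))

lemma integral_inv_sub_sq_le (hbc : b ≤ c) (hd : 0 < d) (h : ∀ p ∈ Icc b c, d ≤ |p - a|) :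
    ∫ p in b..c, (p - a)⁻¹ ^ 2 ≤ d⁻¹ := by
  have hftc : ∫ p in b..c, (p - a)⁻¹ ^ 2 = -(c - a)⁻¹ - -(b - a)⁻¹ := by
    refine intervalIntegral.integral_eq_sub_of_hasDerivAt (f := fun p => -(p - a)⁻¹) ?_ ?_
    · intro p hp
      have hne : p - a ≠ 0 := abs_pos.1 (hd.trans_le (h p (by rwa [uIcc_of_le hbc] at hp)))
      refine (((hasDerivAt_id p).sub_const a).fun_inv hne).fun_neg.congr_deriv ?_
      rw [neg_div, neg_neg, one_div, inv_pow, id]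
    · refine ContinuousOn.intervalIntegrable ?_
      rw [uIcc_of_le hbc]
      exact (continuousOn_inv_sub_of_le_abs_sub hd h).pow 2
  have hb := h b (left_mem_Icc.2 hbc)
  have hc := h c (right_mem_Icc.2 hbc)
  rw [hftc]
  rcases lt_or_ge a b with hab | hba
  · rw [abs_of_pos (by linarith)] at hb
    have hcinv : 0 ≤ (c - a)⁻¹ := inv_nonneg.2 (by linarith)
    linarith [inv_anti₀ hd hb]
  · have hca : c < a := by
      by_contra! hac
      have ha := h a ⟨hba, hac⟩
      rw [sub_self, abs_zero] at ha
      linarith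
    rw [abs_of_neg (by linarith)] at hc
    have hcinv := inv_anti₀ hd hc
    rw [inv_neg] at hcinv
    have hbinv : (b - a)⁻¹ ≤ 0 := inv_nonpos.2 (by linarith)
    linarith

lemma integral_abs_mul_norm_le_sqrt_mul_eLpNorm {α E : Type*} [MeasurableSpace α]
    [NormedAddCommGroup E] {μ : Measure α} {k : α → ℝ} {f : α → E} (hk : MemLp k 2 μ)
    (hf : MemLp f 2 μ) :
    ∫ p, |k p| * ‖f p‖ ∂μ ≤ √(∫ p, k p ^ 2 ∂μ) * (eLpNorm f 2 μ).toReal := by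
  have hholder := integral_mul_le_Lp_mul_Lq_of_nonneg Real.HolderConjugate.two_two
    (Eventually.of_forall fun p => abs_nonneg (k p))
    (Eventually.of_forall fun p => norm_nonneg (f p))
    (by simpa only [ENNReal.ofReal_ofNat, Real.norm_eq_abs] using hk.norm)
    (by simpa only [ENNReal.ofReal_ofNat] using hf.norm)
  rw [toReal_eLpNorm hf.1, Real.sqrt_eq_rpow,
    lpNorm_eq_integral_norm_rpow_toReal two_ne_zero ENNReal.ofNat_ne_top hf.1]
  simpa only [one_div, Real.rpow_ofNat, sq_abs, ENNReal.toReal_ofNat] using hholder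

lemma integral_inv_abs_sub_mul_norm_le {E : Type*} [NormedAddCommGroup E] {f : ℝ → E}
    (hbc : b ≤ c) (hd : 0 < d) (h : ∀ p ∈ Icc b c, d ≤ |p - a|)
    (hf : MemLp f 2 (volume.restrict (Ioc b c))) :
    ∫ p in b..c, |p - a|⁻¹ * ‖f p‖ ≤
      (√d)⁻¹ * (eLpNorm f 2 (volume.restrict (Ioc b c))).toReal := by
  have hweight : MemLp (fun p : ℝ => (p - a)⁻¹) 2 (volume.restrict (Ioc b c)) := by
    refine MemLp.of_bound (((continuousOn_inv_sub_of_le_abs_sub hd h).mono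
      Ioc_subset_Icc_self).aestronglyMeasurable measurableSet_Ioc) d⁻¹ ?_
    filter_upwards [ae_restrict_mem measurableSet_Ioc] with p hp
    rw [norm_inv]
    exact inv_anti₀ hd (h p (Ioc_subset_Icc_self hp))
  have hcs := integral_abs_mul_norm_le_sqrt_mul_eLpNorm hweight hf
  have hsq := integral_inv_sub_sq_le hbc hd h
  simp only [abs_inv] at hcs
  rw [← Real.sqrt_inv, intervalIntegral.integral_of_le hbc]
  rw [intervalIntegral.integral_of_le hbc] at hsq
  exact hcs.trans (by gcongr)

end PuncturedWeight

section NonstationaryPhase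

variable {b c : ℝ} {φ φ' : ℝ → ℝ} {G G' : ℝ → ℂ}

lemma norm_cexp_I_mul_ofReal (θ : ℝ) : ‖Complex.exp (Complex.I * θ)‖ = 1 := by
  rw [mul_comm, Complex.norm_exp_ofReal_mul_I]

lemma norm_integral_deriv_mul_cexp_mul_le (hbc : b ≤ c)
    (hφ : ∀ p ∈ Icc b c, HasDerivAt φ (φ' p) p) (hφ' : IntervalIntegrable φ' volume b c)
    (hG : ∀ p ∈ Icc b c, HasDerivAt G (G' p) p) (hG' : IntervalIntegrable G' volume b c) :
    ‖∫ p in b..c, G p * (φ' p * Complex.exp (Complex.I * φ p))‖ ≤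
      ‖G c‖ + ‖G b‖ + ∫ p in b..c, ‖G' p‖ := by
  set e : ℝ → ℂ := fun p => Complex.exp (Complex.I * φ p)
  have he : ∀ p, ‖e p‖ = 1 := fun p => norm_cexp_I_mul_ofReal (φ p)
  have hec : ContinuousOn e (uIcc b c) := by
    rw [uIcc_of_le hbc]
    have hφc : ContinuousOn φ (Icc b c) := fun p hp => (hφ p hp).continuousAt.continuousWithinAt
    exact (continuousOn_const.mul (Complex.continuous_ofReal.comp_continuousOn hφc)).cexp
  have hparts := intervalIntegral.integral_mul_deriv_eq_deriv_mul (u := G) (v := e)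
    (v' := fun p => Complex.I * (φ' p * e p)) (by rwa [uIcc_of_le hbc])
    (fun p hp => by
      rw [uIcc_of_le hbc] at hp
      exact (((hφ p hp).ofReal_comp.const_mul Complex.I).cexp).congr_deriv (by ring))
    hG' ((IntervalIntegrable.mul_continuousOn ⟨hφ'.1.ofReal, hφ'.2.ofReal⟩ hec).const_mul _)
  simp only [mul_left_comm _ Complex.I, intervalIntegral.integral_const_mul] at hparts
  calc ‖∫ p in b..c, G p * (φ' p * e p)‖
      = ‖G c * e c - G b * e b - ∫ p in b..c, G' p * e p‖ := by
        rw [← hparts, norm_mul, Complex.norm_I, one_mul]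
    _ ≤ ‖G c * e c‖ + ‖G b * e b‖ + ‖∫ p in b..c, G' p * e p‖ :=
        (norm_sub_le _ _).trans (add_le_add_left (norm_sub_le _ _) _)
    _ ≤ ‖G c * e c‖ + ‖G b * e b‖ + ∫ p in b..c, ‖G' p * e p‖ := by
        gcongr
        exact intervalIntegral.norm_integral_le_integral_norm hbc
    _ = ‖G c‖ + ‖G b‖ + ∫ p in b..c, ‖G' p‖ := by simp only [norm_mul, he, mul_one]

variable {a d A K : ℝ} {g g' : ℝ → ℝ} {w w' : ℝ → ℂ}

lemma intervalIntegrable_ofReal_mul_add_mul (hbc : b ≤ c) (hg : ContinuousOn g (Icc b c))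
    (hg' : ContinuousOn g' (Icc b c)) (hw : ContinuousOn w (Icc b c))
    (hw' : IntervalIntegrable w' volume b c) :
    IntervalIntegrable (fun p => g' p * w p + g p * w' p) volume b c := by
  rw [← uIcc_of_le hbc] at hg hg' hw
  exact ((Complex.continuous_ofReal.comp_continuousOn hg').mul hw).intervalIntegrable.add
    (hw'.continuousOn_mul (Complex.continuous_ofReal.comp_continuousOn hg))

lemma integral_norm_ofReal_mul_add_mul_le (hbc : b ≤ c) (hd : 0 < d)
    (h : ∀ p ∈ Icc b c, d ≤ |p - a|) (hK : 0 ≤ K)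
    (hg : ContinuousOn g (Icc b c)) (hg' : ContinuousOn g' (Icc b c))
    (hgK : ∀ p ∈ Icc b c, |g p| ≤ K * |p - a|⁻¹)
    (hgK' : ∀ p ∈ Icc b c, |g' p| ≤ K * (p - a)⁻¹ ^ 2)
    (hw : ContinuousOn w (Icc b c)) (hwA : ∀ p ∈ Icc b c, ‖w p‖ ≤ A)
    (hw' : MemLp w' 2 (volume.restrict (Ioc b c))) :
    ∫ p in b..c, ‖g' p * w p + g p * w' p‖ ≤
      K * (d⁻¹ * A + (√d)⁻¹ * (eLpNorm w' 2 (volume.restrict (Ioc b c))).toReal) := by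
  have hA : 0 ≤ A := (norm_nonneg _).trans (hwA b (left_mem_Icc.2 hbc))
  have hw'int : IntervalIntegrable w' volume b c :=
    (intervalIntegrable_iff_integrableOn_Ioc_of_le hbc).2 (hw'.integrable one_le_two)
  have hinv := continuousOn_inv_sub_of_le_abs_sub hd h
  rw [← uIcc_of_le hbc] at hinv
  have hsq_int : IntervalIntegrable (fun p => K * A * (p - a)⁻¹ ^ 2) volume b c :=
    (hinv.pow 2).intervalIntegrable.const_mul _
  have habs_int : IntervalIntegrable (fun p => K * (|p - a|⁻¹ * ‖w' p‖)) volume b c := by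
    simpa only [abs_inv] using (hw'int.norm.continuousOn_mul hinv.abs).const_mul K
  have hpointwise : ∀ p ∈ Icc b c,
      ‖g' p * w p + g p * w' p‖ ≤ K * A * (p - a)⁻¹ ^ 2 + K * (|p - a|⁻¹ * ‖w' p‖) := by
    intro p hp
    refine (norm_add_le _ _).trans (add_le_add ?_ ?_) <;>
      rw [norm_mul, Complex.norm_real, Real.norm_eq_abs]
    · rw [mul_right_comm]
      exact mul_le_mul (hgK' p hp) (hwA p hp) (norm_nonneg _) (by positivity)
    · rw [← mul_assoc]
      exact mul_le_mul_of_nonneg_right (hgK p hp) (norm_nonneg _)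
  calc ∫ p in b..c, ‖g' p * w p + g p * w' p‖
      ≤ ∫ p in b..c, (K * A * (p - a)⁻¹ ^ 2 + K * (|p - a|⁻¹ * ‖w' p‖)) :=
        intervalIntegral.integral_mono_on hbc
          (intervalIntegrable_ofReal_mul_add_mul hbc hg hg' hw hw'int).norm
          (hsq_int.add habs_int) hpointwise
    _ = K * (A * (∫ p in b..c, (p - a)⁻¹ ^ 2) + ∫ p in b..c, |p - a|⁻¹ * ‖w' p‖) := by
        rw [intervalIntegral.integral_add hsq_int habs_int, intervalIntegral.integral_const_mul,
          intervalIntegral.integral_const_mul, mul_add, mul_assoc]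
    _ ≤ K * (d⁻¹ * A + (√d)⁻¹ * (eLpNorm w' 2 (volume.restrict (Ioc b c))).toReal) := by
        rw [mul_comm A]
        gcongr
        · exact integral_inv_sub_sq_le hbc hd h
        · exact integral_inv_abs_sub_mul_norm_le hbc hd h hw'

lemma norm_integral_mul_deriv_mul_cexp_le (hbc : b ≤ c) (hd : 0 < d)
    (h : ∀ p ∈ Icc b c, d ≤ |p - a|)
    (hφ : ∀ p ∈ Icc b c, HasDerivAt φ (φ' p) p) (hφ' : IntervalIntegrable φ' volume b c)
    (hg : ∀ p ∈ Icc b c, HasDerivAt g (g' p) p) (hg' : ContinuousOn g' (Icc b c))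
    (hgK : ∀ p ∈ Icc b c, |g p| ≤ K * |p - a|⁻¹)
    (hgK' : ∀ p ∈ Icc b c, |g' p| ≤ K * (p - a)⁻¹ ^ 2)
    (hw : ∀ p ∈ Icc b c, HasDerivAt w (w' p) p) (hwA : ∀ p ∈ Icc b c, ‖w p‖ ≤ A)
    (hw' : MemLp w' 2 (volume.restrict (Ioc b c))) :
    ‖∫ p in b..c, g p * w p * (φ' p * Complex.exp (Complex.I * φ p))‖ ≤
      K * (3 * d⁻¹ * A + (√d)⁻¹ * (eLpNorm w' 2 (volume.restrict (Ioc b c))).toReal) := by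
  have hbm : b ∈ Icc b c := left_mem_Icc.2 hbc
  have hK : 0 ≤ K := nonneg_of_mul_nonneg_left ((abs_nonneg _).trans (hgK b hbm))
    (inv_pos.2 (hd.trans_le (h b hbm)))
  have hgc : ContinuousOn g (Icc b c) := fun p hp => (hg p hp).continuousAt.continuousWithinAt
  have hwc : ContinuousOn w (Icc b c) := fun p hp => (hw p hp).continuousAt.continuousWithinAt
  have hw'int : IntervalIntegrable w' volume b c :=
    (intervalIntegrable_iff_integrableOn_Ioc_of_le hbc).2 (hw'.integrable one_le_two)
  have hparts := norm_integral_deriv_mul_cexp_mul_le hbc hφ hφ'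
    (fun p hp => (hg p hp).ofReal_comp.fun_mul (hw p hp))
    (intervalIntegrable_ofReal_mul_add_mul hbc hgc hg' hwc hw'int)
  have hint := integral_norm_ofReal_mul_add_mul_le hbc hd h hK hgc hg' hgK hgK' hwc hwA hw'
  have hboundary {p : ℝ} (hp : p ∈ Icc b c) : ‖g p * w p‖ ≤ K * d⁻¹ * A := by
    rw [norm_mul, Complex.norm_real, Real.norm_eq_abs]
    have hgd : |g p| ≤ K * d⁻¹ := (hgK p hp).trans (by gcongr; exact h p hp)
    exact mul_le_mul hgd (hwA p hp) (norm_nonneg _) (by positivity)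
  linarith [hboundary hbm, hboundary (right_mem_Icc.2 hbc)]

end NonstationaryPhase

section CubicPhase

/-- The oscillating factor `e^{i(px + p³t)}` of the Airy flow at time `t` and position `x`. -/
def osc (t x p : ℝ) : ℂ := Complex.exp (Complex.I * ((p * x + p ^ 3 * t : ℝ) : ℂ))

/-- The `p`-derivative `x + 3tp²` of the phase `px + p³t`. -/
def phaseDeriv (t x p : ℝ) : ℝ := x + 3 * t * p ^ 2

/-- The nonnegative stationary point `√(-x/(3t))` of the phase when `x ≤ 0`. For `x ≥ 0`, where
`Real.sqrt` returns `0`, it is the point `0` of `[0, ∞)` at which the phase varies most slowly. -/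
def statPoint (t x : ℝ) : ℝ := √(-x / (3 * t))

/-- The size `√(|x|/(3t))` of the frequencies at which the two terms of `x + 3tp²` are
comparable. -/
def freqScale (t x : ℝ) : ℝ := √(|x| / (3 * t))

variable {t x p : ℝ}

lemma norm_osc (t x p : ℝ) : ‖osc t x p‖ = 1 := norm_cexp_I_mul_ofReal _

lemma continuous_osc (t x : ℝ) : Continuous (osc t x) := by unfold osc; fun_prop

lemma hasDerivAt_phase (t x p : ℝ) :
    HasDerivAt (fun p : ℝ => p * x + p ^ 3 * t) (phaseDeriv t x p) p := by
  refine (((hasDerivAt_id p).mul_const x).fun_add ((hasDerivAt_pow 3 p).mul_const t)).congr_deriv ?_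
  rw [phaseDeriv]
  push_cast
  ring

lemma continuous_phaseDeriv (t x : ℝ) : Continuous (phaseDeriv t x) := by
  unfold phaseDeriv; fun_prop

lemma hasDerivAt_phaseDeriv (t x p : ℝ) : HasDerivAt (phaseDeriv t x) (6 * t * p) p := by
  refine (((hasDerivAt_pow 2 p).const_mul (3 * t)).const_add x).congr_deriv ?_
  push_cast
  ring

lemma hasDerivAt_osc (t x p : ℝ) :
    HasDerivAt (fun x => osc t x p) (Complex.I * p * osc t x p) x := by
  have hphase : HasDerivAt (fun x : ℝ => p * x + p ^ 3 * t) p x := by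
    simpa only [mul_one, id] using ((hasDerivAt_id x).const_mul p).add_const (p ^ 3 * t)
  refine (hphase.ofReal_comp.const_mul Complex.I).cexp.congr_deriv ?_
  rw [osc, mul_comm]

lemma statPoint_nonneg (t x : ℝ) : 0 ≤ statPoint t x := Real.sqrt_nonneg _

lemma freqScale_nonneg (t x : ℝ) : 0 ≤ freqScale t x := Real.sqrt_nonneg _

lemma statPoint_le_freqScale (ht : 0 ≤ t) : statPoint t x ≤ freqScale t x := by
  unfold statPoint freqScale
  gcongr
  exact neg_le_abs x

lemma three_mul_mul_freqScale_sq (ht : 0 < t) : 3 * t * freqScale t x ^ 2 = |x| := by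
  rw [freqScale, Real.sq_sqrt (by positivity)]
  field_simp

lemma abs_sub_statPoint_le (ht : 0 ≤ t) (hp : 0 ≤ p) :
    |p - statPoint t x| ≤ p + freqScale t x := by
  have := statPoint_le_freqScale (x := x) ht
  have := statPoint_nonneg t x
  rw [abs_le]
  constructor <;> linarith

lemma two_mul_mul_le_abs_phaseDeriv (ht : 0 < t) (hp : 0 ≤ p) :
    2 * t * ((p + freqScale t x) * |p - statPoint t x|) ≤ |phaseDeriv t x p| := by
  have hσ := freqScale_nonneg t x
  have hσx := three_mul_mul_freqScale_sq (x := x) ht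
  rcases le_total x 0 with hx | hx
  · have ha : statPoint t x = freqScale t x := by rw [statPoint, freqScale, abs_of_nonpos hx]
    rw [abs_of_nonpos hx] at hσx
    have hfactor : phaseDeriv t x p = 3 * t * ((p + freqScale t x) * (p - freqScale t x)) := by
      rw [phaseDeriv]
      linarith
    rw [hfactor, ha, abs_mul (3 * t), abs_mul (p + freqScale t x),
      abs_of_nonneg (by positivity : 0 ≤ 3 * t),
      abs_of_nonneg (by positivity : 0 ≤ p + freqScale t x)]
    gcongr
    norm_num
  · have ha : statPoint t x = 0 := Real.sqrt_eq_zero_of_nonpos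
      (div_nonpos_of_nonpos_of_nonneg (by linarith) (by positivity))
    rw [abs_of_nonneg hx] at hσx
    rw [phaseDeriv, ha, sub_zero, abs_of_nonneg hp, abs_of_nonneg (by positivity)]
    have hsq := mul_nonneg ht.le (sq_nonneg (p - freqScale t x))
    linarith

variable {μ m m' : ℝ}

lemma abs_phaseDeriv_pos (ht : 0 < t) (hp : 0 < p) (hpa : 0 < |p - statPoint t x|) :
    0 < |phaseDeriv t x p| := by
  have := freqScale_nonneg t x
  exact lt_of_lt_of_le (by positivity) (two_mul_mul_le_abs_phaseDeriv ht hp.le)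

lemma abs_div_phaseDeriv_le (ht : 0 < t) (hp : 0 < p) (hpa : 0 < |p - statPoint t x|)
    (hm : |m| ≤ μ * (p + freqScale t x)) :
    |m / phaseDeriv t x p| ≤ 2 * μ / t * |p - statPoint t x|⁻¹ := by
  have hσ := freqScale_nonneg t x
  have hμ : 0 ≤ μ := nonneg_of_mul_nonneg_left ((abs_nonneg m).trans hm) (by positivity)
  calc |m / phaseDeriv t x p| = |m| / |phaseDeriv t x p| := abs_div _ _
    _ ≤ μ * (p + freqScale t x) / (2 * t * ((p + freqScale t x) * |p - statPoint t x|)) := by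
        gcongr
        exact two_mul_mul_le_abs_phaseDeriv ht hp.le
    _ = μ / (2 * t) * |p - statPoint t x|⁻¹ := by field_simp
    _ ≤ 2 * μ / t * |p - statPoint t x|⁻¹ := by
        gcongr ?_ * _
        rw [div_le_div_iff₀ (by positivity) ht]
        nlinarith [mul_nonneg hμ ht.le]

lemma abs_deriv_div_phaseDeriv_le (ht : 0 < t) (hp : 0 < p) (hpa : 0 < |p - statPoint t x|)
    (hm : |m| ≤ μ * (p + freqScale t x)) (hm' : |m'| ≤ μ) :
    |(m' * phaseDeriv t x p - m * (6 * t * p)) / phaseDeriv t x p ^ 2| ≤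
      2 * μ / t * (p - statPoint t x)⁻¹ ^ 2 := by
  have hΦ := abs_phaseDeriv_pos ht hp hpa
  have hlower := two_mul_mul_le_abs_phaseDeriv (x := x) ht hp.le
  have hdist := abs_sub_statPoint_le (x := x) ht.le hp.le
  have hσ := freqScale_nonneg t x
  have hμ : 0 ≤ μ := (abs_nonneg m').trans hm'
  set D := |p - statPoint t x|
  set s := p + freqScale t x
  have hs0 : 0 < s := by positivity
  have hps : p ≤ s := by linarith
  calc |(m' * phaseDeriv t x p - m * (6 * t * p)) / phaseDeriv t x p ^ 2|
      = |m' * phaseDeriv t x p - m * (6 * t * p)| / |phaseDeriv t x p| ^ 2 := by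
        rw [abs_div, abs_pow]
    _ ≤ (|m'| * |phaseDeriv t x p| + |m| * (6 * t * p)) / |phaseDeriv t x p| ^ 2 := by
        gcongr
        refine (abs_sub _ _).trans_eq ?_
        rw [abs_mul, abs_mul, abs_of_pos (by positivity : 0 < 6 * t * p)]
    _ = |m'| / |phaseDeriv t x p| + |m| * (6 * t * p) / |phaseDeriv t x p| ^ 2 := by field_simp
    _ ≤ μ / (2 * t * (D * D)) + μ * s * (6 * t * s) / (2 * t * (s * D)) ^ 2 := by
        gcongr
        exact le_trans (by gcongr) hlower
    _ = 2 * μ / t * (D ^ 2)⁻¹ := by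
        field_simp
        norm_num
    _ = 2 * μ / t * (p - statPoint t x)⁻¹ ^ 2 := by rw [sq_abs, inv_pow]

end CubicPhase

section ZoneWidth

/-- The half-width `(t^{1/3} ⟨|x|/t^{1/3}⟩^{1/4})⁻¹` of the neighbourhood of the stationary point
in which the oscillation of `e^{i(px + p³t)}` is not exploited. -/
def zoneWidth (t x : ℝ) : ℝ := (t ^ (1 / 3 : ℝ) * jap (|x| / t ^ (1 / 3 : ℝ)) ^ (1 / 4 : ℝ))⁻¹

variable {t y : ℝ}

lemma one_le_jap (y : ℝ) : 1 ≤ jap y := Real.one_le_sqrt.2 (by linarith [sq_nonneg y])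

lemma jap_pos (y : ℝ) : 0 < jap y := one_pos.trans_le (one_le_jap y)

lemma le_jap (y : ℝ) : y ≤ jap y := Real.le_sqrt_of_sq_le (by linarith)

lemma jap_le_one_add (hy : 0 ≤ y) : jap y ≤ 1 + y :=
  Real.sqrt_le_iff.2 ⟨by positivity, by linarith [add_sq 1 y]⟩

lemma one_le_jap_rpow (y : ℝ) : 1 ≤ jap y ^ (1 / 4 : ℝ) :=
  Real.one_le_rpow (one_le_jap y) (by norm_num)

lemma jap_rpow_pow_four (y : ℝ) : (jap y ^ (1 / 4 : ℝ)) ^ 4 = jap y := by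
  rw [← Real.rpow_natCast, ← Real.rpow_mul (jap_pos y).le]
  norm_num

lemma rpow_one_third_pow_three (ht : 0 ≤ t) : (t ^ (1 / 3 : ℝ)) ^ 3 = t := by
  rw [← Real.rpow_natCast, ← Real.rpow_mul ht]
  norm_num

lemma zoneWidth_pos (ht : 0 < t) (x : ℝ) : 0 < zoneWidth t x :=
  inv_pos.2 (mul_pos (Real.rpow_pos_of_pos ht _) (Real.rpow_pos_of_pos (jap_pos _) _))

lemma zoneWidth_eq (ht : 0 < t) (x : ℝ) :
    zoneWidth t x = t ^ (-(1 / 3 : ℝ)) * jap (|x| / t ^ (1 / 3 : ℝ)) ^ (-(1 / 4 : ℝ)) := by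
  rw [zoneWidth, mul_inv, Real.rpow_neg ht.le, Real.rpow_neg (jap_pos _).le]

lemma inv_mul_zoneWidth (ht : 0 < t) (x : ℝ) :
    (t * zoneWidth t x)⁻¹ =
      t ^ (-(2 / 3 : ℝ)) * jap (|x| / t ^ (1 / 3 : ℝ)) ^ (1 / 4 : ℝ) := by
  rw [zoneWidth, mul_inv, inv_inv, ← mul_assoc, ← Real.rpow_neg_one, ← Real.rpow_add ht]
  norm_num

lemma sqrt_zoneWidth_le (ht : 0 < t) (x : ℝ) : √(zoneWidth t x) ≤ t ^ (-(1 / 6 : ℝ)) := by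
  have hwidth : zoneWidth t x ≤ t ^ (-(1 / 3 : ℝ)) := by
    rw [zoneWidth_eq ht]
    exact mul_le_of_le_one_right (by positivity)
      (Real.rpow_le_one_of_one_le_of_nonpos (one_le_jap _) (by norm_num))
  calc √(zoneWidth t x) ≤ √(t ^ (-(1 / 3 : ℝ))) := Real.sqrt_le_sqrt hwidth
    _ = t ^ (-(1 / 6 : ℝ)) := by
        rw [Real.sqrt_eq_rpow, ← Real.rpow_mul ht.le]
        norm_num

lemma mul_zoneWidth_sq (ht : 0 < t) (x : ℝ) :
    t * zoneWidth t x ^ 2 =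
      t ^ (1 / 3 : ℝ) / (jap (|x| / t ^ (1 / 3 : ℝ)) ^ (1 / 4 : ℝ)) ^ 2 := by
  have hl : 0 < t ^ (1 / 3 : ℝ) := by positivity
  have hr : 0 < jap (|x| / t ^ (1 / 3 : ℝ)) ^ (1 / 4 : ℝ) := Real.rpow_pos_of_pos (jap_pos _) _
  have hlt := rpow_one_third_pow_three ht.le
  rw [zoneWidth]
  set l := t ^ (1 / 3 : ℝ)
  set r := jap (|x| / l) ^ (1 / 4 : ℝ)
  calc t * (l * r)⁻¹ ^ 2 = l ^ 3 * (l * r)⁻¹ ^ 2 := by rw [hlt]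
    _ = l / r ^ 2 := by field_simp

lemma three_mul_sq_rpow_mul_freqScale (ht : 0 < t) (x : ℝ) :
    3 * (t ^ (1 / 3 : ℝ) * freqScale t x) ^ 2 = |x| / t ^ (1 / 3 : ℝ) := by
  have hl : 0 < t ^ (1 / 3 : ℝ) := by positivity
  rw [eq_div_iff hl.ne', ← three_mul_mul_freqScale_sq ht]
  linear_combination 3 * freqScale t x ^ 2 * rpow_one_third_pow_three ht.le

lemma mul_zoneWidth_cube_le_one (ht : 0 < t) (x : ℝ) : t * zoneWidth t x ^ 3 ≤ 1 := by
  have hr := one_le_jap_rpow (|x| / t ^ (1 / 3 : ℝ))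
  rw [pow_succ, ← mul_assoc, mul_zoneWidth_sq ht, zoneWidth]
  set r := jap (|x| / t ^ (1 / 3 : ℝ)) ^ (1 / 4 : ℝ)
  calc t ^ (1 / 3 : ℝ) / r ^ 2 * (t ^ (1 / 3 : ℝ) * r)⁻¹ = (r ^ 3)⁻¹ := by field_simp
    _ ≤ 1 := inv_le_one_of_one_le₀ (one_le_pow₀ hr)

lemma rpow_mul_freqScale_le (ht : 0 < t) (x : ℝ) :
    t ^ (1 / 3 : ℝ) * freqScale t x ≤ (jap (|x| / t ^ (1 / 3 : ℝ)) ^ (1 / 4 : ℝ)) ^ 2 := by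
  refine le_of_sq_le_sq ?_ (by positivity)
  rw [← pow_mul, jap_rpow_pow_four]
  linarith [three_mul_sq_rpow_mul_freqScale ht x, le_jap (|x| / t ^ (1 / 3 : ℝ)),
    sq_nonneg (t ^ (1 / 3 : ℝ) * freqScale t x)]

lemma mul_zoneWidth_sq_mul_freqScale_le_one (ht : 0 < t) (x : ℝ) :
    t * zoneWidth t x ^ 2 * freqScale t x ≤ 1 := by
  rw [mul_zoneWidth_sq ht, div_mul_eq_mul_div]
  exact div_le_one_of_le₀ (rpow_mul_freqScale_le ht x) (sq_nonneg _)

lemma one_le_three_mul_zoneWidth_sq_mul (ht : 0 < t) (x : ℝ) :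
    1 ≤ 3 * (t * zoneWidth t x ^ 2 * (freqScale t x + zoneWidth t x)) := by
  have hσ := freqScale_nonneg t x
  have hr := one_le_jap_rpow (|x| / t ^ (1 / 3 : ℝ))
  have hs := rpow_mul_freqScale_le ht x
  have hr4 : (jap (|x| / t ^ (1 / 3 : ℝ)) ^ (1 / 4 : ℝ)) ^ 4 ≤
      1 + 3 * (t ^ (1 / 3 : ℝ) * freqScale t x) ^ 2 := by
    rw [jap_rpow_pow_four, three_mul_sq_rpow_mul_freqScale ht]
    exact jap_le_one_add (by positivity)
  rw [mul_zoneWidth_sq ht, zoneWidth]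
  set r := jap (|x| / t ^ (1 / 3 : ℝ)) ^ (1 / 4 : ℝ)
  set s := t ^ (1 / 3 : ℝ) * freqScale t x with hs_def
  have hpoly : r ^ 4 ≤ 3 * (s * r ^ 2 + r) := by
    have : s * s ≤ s * r ^ 2 := by gcongr
    linarith [sq s]
  calc 1 = r ^ 4 / r ^ 4 := (div_self (by positivity)).symm
    _ ≤ 3 * (s * r ^ 2 + r) / r ^ 4 := by gcongr
    _ = 3 * (t ^ (1 / 3 : ℝ) / r ^ 2 * (freqScale t x + (t ^ (1 / 3 : ℝ) * r)⁻¹)) := by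
        rw [hs_def]
        field_simp

end ZoneWidth

lemma norm_integral_le_of_zones {E : Type*} [NormedAddCommGroup E] [NormedSpace ℝ E] {f : ℝ → E}
    {a δ L M R : ℝ} (ha : 0 ≤ a) (hδ : 0 < δ) (hR : a + δ ≤ R) (hf : IntegrableOn f (Ioc 0 R))
    (hnear : ∀ p ∈ Ioc 0 (a + δ), ‖f p‖ ≤ L)
    (hfar : ∀ b c, 0 < b → b ≤ c → (∀ p ∈ Icc b c, δ ≤ |p - a|) → ‖∫ p in b..c, f p‖ ≤ M) :
    ‖∫ p in 0..R, f p‖ ≤ 3 * δ * L + 2 * M := by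
  have hint {b c : ℝ} (hb : 0 ≤ b) (hbc : b ≤ c) (hc : c ≤ R) : IntervalIntegrable f volume b c :=
    (intervalIntegrable_iff_integrableOn_Ioc_of_le hbc).2 (hf.mono_set (Ioc_subset_Ioc hb hc))
  have hshort {b c : ℝ} (hb : 0 ≤ b) (hbc : b ≤ c) (hc : c ≤ a + δ) :
      ‖∫ p in b..c, f p‖ ≤ L * (c - b) := by
    rw [← abs_of_nonneg (sub_nonneg.2 hbc)]
    refine intervalIntegral.norm_integral_le_of_norm_le_const fun p hp => ?_
    rw [uIoc_of_le hbc] at hp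
    exact hnear p ⟨hb.trans_lt hp.1, hp.2.trans hc⟩
  have hL : 0 ≤ L := (norm_nonneg _).trans (hnear (a + δ) ⟨by linarith, le_rfl⟩)
  have hright := hfar (a + δ) R (by linarith) hR fun p hp => le_abs.2 (.inl (by linarith [hp.1]))
  rw [← intervalIntegral.integral_add_adjacent_intervals
    (hint le_rfl (by linarith) hR) (hint (by linarith) hR le_rfl)]
  refine (norm_add_le _ _).trans ?_
  rcases le_total a (2 * δ) with h | h
  · have hleft := hshort le_rfl (by linarith : 0 ≤ a + δ) le_rfl
    have hlen : L * (a + δ - 0) ≤ L * (3 * δ) := by gcongr; linarith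
    linarith [(norm_nonneg _).trans hright]
  · have horigin := hshort le_rfl hδ.le (by linarith)
    have hleft := hfar δ (a - δ) hδ (by linarith) fun p hp => le_abs.2 (.inr (by linarith [hp.2]))
    have hmiddle := hshort (by linarith : 0 ≤ a - δ) (by linarith : a - δ ≤ a + δ) le_rfl
    rw [← intervalIntegral.integral_add_adjacent_intervals
        (hint le_rfl (by linarith : 0 ≤ a - δ) (by linarith))
        (hint (by linarith) (by linarith : a - δ ≤ a + δ) hR),
      ← intervalIntegral.integral_add_adjacent_intervals
        (hint le_rfl hδ.le (by linarith)) (hint hδ.le (by linarith : δ ≤ a - δ) (by linarith))]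
    have htriangle := norm_add₃_le (a := ∫ p in 0..δ, f p) (b := ∫ p in δ..(a - δ), f p)
      (c := ∫ p in (a - δ)..(a + δ), f p)
    linarith

section Profile

/-- A profile on the half-line: differentiable on `(0, ∞)`, bounded there by `A`, with
square-integrable derivative. This is all that the oscillatory integral over `(0, ∞)` sees of an
element of `E(t)`. -/
structure IsProfile (w : ℝ → ℂ) (A : ℝ) : Prop where
  norm_le : ∀ p, 0 < p → ‖w p‖ ≤ A
  differentiableAt : ∀ p, 0 < p → DifferentiableAt ℝ w p
  memLp_deriv : MemLp (deriv w) 2 (volume.restrict (Ioi 0))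

lemma MemE.isProfile {w : ℝ → ℂ} (hw : MemE w) : IsProfile w (supN w) where
  norm_le p _ := le_ciSup hw.bdd p
  differentiableAt := hw.diff
  memLp_deriv := hw.derivL2

lemma dL2_nonneg (w : ℝ → ℂ) : 0 ≤ dL2 w := ENNReal.toReal_nonneg

variable {w : ℝ → ℂ} {A t x : ℝ}

namespace IsProfile

lemma bound_nonneg (hw : IsProfile w A) : 0 ≤ A := (norm_nonneg _).trans (hw.norm_le 1 one_pos)

lemma continuousOn (hw : IsProfile w A) : ContinuousOn w (Ioi 0) := fun p hp =>
  (hw.differentiableAt p hp).continuousAt.continuousWithinAt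

lemma eLpNorm_deriv_Ioc_le (hw : IsProfile w A) {b c : ℝ} (hb : 0 ≤ b) :
    (eLpNorm (deriv w) 2 (volume.restrict (Ioc b c))).toReal ≤ dL2 w :=
  ENNReal.toReal_mono hw.memLp_deriv.2.ne <|
    eLpNorm_mono_measure _ (Measure.restrict_mono (fun _ hp => hb.trans_lt hp.1) le_rfl)

lemma norm_integral_far_le (hw : IsProfile w A) (ht : 0 < t) {m : ℝ → ℝ} (hm : ContDiff ℝ 1 m)
    {b c d μ : ℝ} (hb : 0 < b) (hbc : b ≤ c) (hd : 0 < d)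
    (h : ∀ p ∈ Icc b c, d ≤ |p - statPoint t x|)
    (hmμ : ∀ p ∈ Icc b c, |m p| ≤ μ * (p + freqScale t x))
    (hmμ' : ∀ p ∈ Icc b c, |deriv m p| ≤ μ) :
    ‖∫ p in b..c, m p * (osc t x p * w p)‖ ≤
      2 * μ / t * (3 * d⁻¹ * A + (√d)⁻¹ * dL2 w) := by
  have hpos : ∀ p ∈ Icc b c, 0 < p := fun p hp => hb.trans_le hp.1
  have hsep : ∀ p ∈ Icc b c, 0 < |p - statPoint t x| := fun p hp => hd.trans_le (h p hp)
  have hΦ : ∀ p ∈ Icc b c, phaseDeriv t x p ≠ 0 := fun p hp =>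
    abs_pos.1 (abs_phaseDeriv_pos ht (hpos p hp) (hsep p hp))
  have hμ : 0 ≤ μ := (abs_nonneg _).trans (hmμ' b (left_mem_Icc.2 hbc))
  have hderiv : ∀ p ∈ Icc b c, HasDerivAt (fun p => m p / phaseDeriv t x p)
      ((deriv m p * phaseDeriv t x p - m p * (6 * t * p)) / phaseDeriv t x p ^ 2) p := fun p hp =>
    (hm.differentiable_one p).hasDerivAt.fun_div (hasDerivAt_phaseDeriv t x p) (hΦ p hp)
  have hcont : ContinuousOn (fun p =>
      (deriv m p * phaseDeriv t x p - m p * (6 * t * p)) / phaseDeriv t x p ^ 2) (Icc b c) := by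
    have hmc := hm.continuous
    have hΦc := continuous_phaseDeriv t x
    exact ContinuousOn.div (by fun_prop) (by fun_prop) fun p hp => pow_ne_zero 2 (hΦ p hp)
  calc ‖∫ p in b..c, m p * (osc t x p * w p)‖
      = ‖∫ p in b..c, (m p / phaseDeriv t x p : ℝ) * w p * (phaseDeriv t x p * osc t x p)‖ := by
        congr 1
        refine intervalIntegral.integral_congr fun p hp => ?_
        rw [uIcc_of_le hbc] at hp
        have hne : (phaseDeriv t x p : ℂ) ≠ 0 := Complex.ofReal_ne_zero.2 (hΦ p hp)
        push_cast
        field_simp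
    _ ≤ 2 * μ / t * (3 * d⁻¹ * A +
          (√d)⁻¹ * (eLpNorm (deriv w) 2 (volume.restrict (Ioc b c))).toReal) :=
        norm_integral_mul_deriv_mul_cexp_le hbc hd h (fun p _ => hasDerivAt_phase t x p)
          ((continuous_phaseDeriv t x).intervalIntegrable b c) hderiv hcont
          (fun p hp => abs_div_phaseDeriv_le ht (hpos p hp) (hsep p hp) (hmμ p hp))
          (fun p hp => abs_deriv_div_phaseDeriv_le ht (hpos p hp) (hsep p hp) (hmμ p hp)
            (hmμ' p hp))
          (fun p hp => (hw.differentiableAt p (hpos p hp)).hasDerivAt)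
          (fun p hp => hw.norm_le p (hpos p hp))
          (hw.memLp_deriv.mono_measure
            (Measure.restrict_mono (fun _ hp => hb.trans hp.1) le_rfl))
    _ ≤ 2 * μ / t * (3 * d⁻¹ * A + (√d)⁻¹ * dL2 w) := by
        gcongr
        exact hw.eLpNorm_deriv_Ioc_le hb.le

lemma integrableOn_mul_osc_mul (hw : IsProfile w A) {m : ℝ → ℝ} (hm : Continuous m)
    (t x R : ℝ) : IntegrableOn (fun p => m p * (osc t x p * w p)) (Ioc 0 R) := by
  obtain ⟨B, hB⟩ := (isCompact_Icc (a := (0 : ℝ)) (b := R)).exists_bound_of_continuousOn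
    hm.continuousOn
  have hcont : ContinuousOn (fun p => m p * (osc t x p * w p)) (Ioi 0) :=
    (Complex.continuous_ofReal.comp hm).continuousOn.mul
      ((continuous_osc t x).continuousOn.mul hw.continuousOn)
  refine Integrable.of_bound ((hcont.mono fun p hp => hp.1).aestronglyMeasurable
    measurableSet_Ioc) (B * A) ?_
  filter_upwards [ae_restrict_mem measurableSet_Ioc] with p hp
  have hmB := hB p (Ioc_subset_Icc_self hp)
  rw [norm_mul, norm_mul, norm_osc, one_mul, Complex.norm_real]
  exact mul_le_mul hmB (hw.norm_le p hp.1) (norm_nonneg _) ((norm_nonneg _).trans hmB)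

lemma norm_integral_mul_osc_mul_le (hw : IsProfile w A) (ht : 0 < t) {m : ℝ → ℝ}
    (hm : ContDiff ℝ 1 m) {δ L R : ℝ} (hδ : 0 < δ) (hR : statPoint t x + δ ≤ R)
    (hnear : ∀ p ∈ Ioc 0 (statPoint t x + δ), |m p| ≤ L)
    (hfar : ∀ p, 0 < p → δ ≤ |p - statPoint t x| →
      |m p| ≤ 6 * t * δ ^ 2 * L * (p + freqScale t x))
    (hfar' : ∀ p, 0 < p → δ ≤ |p - statPoint t x| → |deriv m p| ≤ 6 * t * δ ^ 2 * L) :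
    ‖∫ p in 0..R, m p * (osc t x p * w p)‖ ≤ 75 * δ * L * (A + √δ * dL2 w) := by
  have ha := statPoint_nonneg t x
  have hL : 0 ≤ L := (abs_nonneg _).trans (hnear (statPoint t x + δ) ⟨by linarith, le_rfl⟩)
  have hzones := norm_integral_le_of_zones ha hδ hR
    (hw.integrableOn_mul_osc_mul hm.continuous t x R) (L := L * A)
    (fun p hp => by
      rw [norm_mul, norm_mul, norm_osc, one_mul, Complex.norm_real]
      exact mul_le_mul (hnear p hp) (hw.norm_le p hp.1) (norm_nonneg _) hL)
    (fun b c hb hbc h => hw.norm_integral_far_le ht hm hb hbc hδ h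
      (fun p hp => hfar p (hb.trans_le hp.1) (h p hp))
      (fun p hp => hfar' p (hb.trans_le hp.1) (h p hp)))
  have hsqrt : δ * (√δ)⁻¹ = √δ := by rw [← div_eq_mul_inv, Real.div_sqrt]
  calc ‖∫ p in 0..R, m p * (osc t x p * w p)‖
      ≤ 3 * δ * (L * A) +
          2 * (2 * (6 * t * δ ^ 2 * L) / t * (3 * δ⁻¹ * A + (√δ)⁻¹ * dL2 w)) := hzones
    _ = 75 * δ * L * A + 24 * δ * L * (δ * (√δ)⁻¹ * dL2 w) := by field_simp; ring
    _ ≤ 75 * δ * L * A + 75 * δ * L * (√δ * dL2 w) := by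
        rw [hsqrt]
        have := dL2_nonneg w
        gcongr
        norm_num
    _ = 75 * δ * L * (A + √δ * dL2 w) := by ring

lemma norm_integral_osc_mul_le (hw : IsProfile w A) (ht : 0 < t) {R : ℝ}
    (hR : statPoint t x + zoneWidth t x ≤ R) :
    ‖∫ p in 0..R, osc t x p * w p‖ ≤
      75 * zoneWidth t x * (A + t ^ (-(1 / 6 : ℝ)) * dL2 w) := by
  have hδ := zoneWidth_pos ht x
  have hmain := hw.norm_integral_mul_osc_mul_le ht (m := fun _ => 1) contDiff_const hδ hR (L := 1)
    (fun _ _ => by rw [abs_one])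
    (fun p hp hpa => by
      have hscale : freqScale t x + zoneWidth t x ≤ 2 * (p + freqScale t x) := by
        linarith [abs_sub_statPoint_le (x := x) ht.le hp.le]
      calc |(1 : ℝ)| = 1 := abs_one
        _ ≤ 3 * (t * zoneWidth t x ^ 2 * (freqScale t x + zoneWidth t x)) :=
            one_le_three_mul_zoneWidth_sq_mul ht x
        _ ≤ 3 * (t * zoneWidth t x ^ 2 * (2 * (p + freqScale t x))) := by gcongr
        _ = 6 * t * zoneWidth t x ^ 2 * 1 * (p + freqScale t x) := by ring)
    (fun _ _ _ => by rw [deriv_const, abs_zero]; positivity)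
  simp only [Complex.ofReal_one, one_mul, mul_one] at hmain
  have hD := dL2_nonneg w
  exact hmain.trans (by gcongr; exact sqrt_zoneWidth_le ht x)

lemma norm_integral_id_mul_osc_mul_le (hw : IsProfile w A) (ht : 0 < t) {R : ℝ}
    (hR : statPoint t x + zoneWidth t x ≤ R) :
    ‖∫ p in 0..R, p * (osc t x p * w p)‖ ≤
      150 * (t * zoneWidth t x)⁻¹ * (A + t ^ (-(1 / 6 : ℝ)) * dL2 w) := by
  have hδ := zoneWidth_pos ht x
  have hσ := freqScale_nonneg t x
  have hL : 6 * t * zoneWidth t x ^ 2 * (2 * (t * zoneWidth t x ^ 2)⁻¹) = 12 := by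
    field_simp
    norm_num
  have hedge : statPoint t x + zoneWidth t x ≤ 2 * (t * zoneWidth t x ^ 2)⁻¹ := by
    rw [← div_eq_mul_inv, le_div_iff₀ (by positivity)]
    have hstat := mul_le_mul_of_nonneg_left (statPoint_le_freqScale (x := x) ht.le)
      (by positivity : 0 ≤ t * zoneWidth t x ^ 2)
    linarith [mul_zoneWidth_cube_le_one ht x, mul_zoneWidth_sq_mul_freqScale_le_one ht x]
  have hmain := hw.norm_integral_mul_osc_mul_le ht contDiff_id hδ hR
    (L := 2 * (t * zoneWidth t x ^ 2)⁻¹)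
    (fun p hp => (abs_of_pos hp.1).trans_le (hp.2.trans hedge))
    (fun p hp _ => by rw [hL, id, abs_of_pos hp]; linarith)
    (fun p _ _ => by rw [hL, deriv_id, abs_one]; norm_num)
  have hD := dL2_nonneg w
  calc ‖∫ p in 0..R, p * (osc t x p * w p)‖
      ≤ 75 * zoneWidth t x * (2 * (t * zoneWidth t x ^ 2)⁻¹) *
          (A + √(zoneWidth t x) * dL2 w) := hmain
    _ = 150 * (t * zoneWidth t x)⁻¹ * (A + √(zoneWidth t x) * dL2 w) := by field_simp; ring
    _ ≤ 150 * (t * zoneWidth t x)⁻¹ * (A + t ^ (-(1 / 6 : ℝ)) * dL2 w) := by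
        gcongr
        exact sqrt_zoneWidth_le ht x

end IsProfile

end Profile

lemma uniformCauchySeqOn_of_dist_le {ι α β : Type*} [SemilatticeSup ι] [Nonempty ι]
    [PseudoMetricSpace β] {F : ι → α → β} {s : Set α} {ε : ι → ℝ} (hε : Tendsto ε atTop (𝓝 0))
    (h : ∀ᶠ N in atTop, ∀ n ≥ N, ∀ x ∈ s, dist (F N x) (F n x) ≤ ε N) :
    UniformCauchySeqOn F atTop s := by
  rw [Metric.uniformCauchySeqOn_iff]
  intro η hη
  obtain ⟨N, hN, hεN⟩ := (h.and (hε.eventually_lt_const (half_pos hη))).exists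
  refine ⟨N, fun m hm n hn x hx => ?_⟩
  linarith [dist_triangle_left (F m x) (F n x) (F N x), hN m hm x hx, hN n hn x hx]

section PhysicalSpace

/-- The `x`-derivative `(1/π) Re ∫_0^R i p e^{i(px + p³t)} w(p) dp` of `physPartial`. -/
def physPartialDeriv (w : ℝ → ℂ) (t x R : ℝ) : ℝ :=
  (1 / Real.pi) * (Complex.I * ∫ p in 0..R, p * (osc t x p * w p)).re

variable {w : ℝ → ℂ} {A t x R : ℝ} {u v : ℝ → ℝ}

lemma physPartial_eq (w : ℝ → ℂ) (t x : ℝ) (hR : 0 ≤ R) :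
    physPartial w t x R = (1 / Real.pi) * (∫ p in 0..R, osc t x p * w p).re := by
  rw [intervalIntegral.integral_of_le hR]
  rfl

lemma abs_one_div_pi_mul_re_le (z : ℂ) : |(1 / Real.pi) * z.re| ≤ ‖z‖ := by
  rw [abs_mul, abs_of_pos (by positivity)]
  have hpi : 1 / Real.pi ≤ 1 := (div_le_one Real.pi_pos).2 (by linarith [Real.pi_gt_three])
  exact (mul_le_of_le_one_left (abs_nonneg _) hpi).trans (Complex.abs_re_le_norm z)

namespace IsProfile

lemma abs_physPartial_le (hw : IsProfile w A) (ht : 0 < t)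
    (hR : statPoint t x + zoneWidth t x ≤ R) :
    |physPartial w t x R| ≤ 150 * t ^ (-(1 / 3 : ℝ)) *
      jap (|x| / t ^ (1 / 3 : ℝ)) ^ (-(1 / 4 : ℝ)) * (A + t ^ (-(1 / 6 : ℝ)) * dL2 w) := by
  have hδ := zoneWidth_pos ht x
  have hA := hw.bound_nonneg
  have hD := dL2_nonneg w
  rw [physPartial_eq w t x (by linarith [statPoint_nonneg t x]), mul_assoc 150,
    ← zoneWidth_eq ht]
  calc _ ≤ ‖∫ p in 0..R, osc t x p * w p‖ := abs_one_div_pi_mul_re_le _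
    _ ≤ 75 * zoneWidth t x * (A + t ^ (-(1 / 6 : ℝ)) * dL2 w) := hw.norm_integral_osc_mul_le ht hR
    _ ≤ 150 * zoneWidth t x * (A + t ^ (-(1 / 6 : ℝ)) * dL2 w) := by gcongr; norm_num

lemma abs_physPartialDeriv_le (hw : IsProfile w A) (ht : 0 < t)
    (hR : statPoint t x + zoneWidth t x ≤ R) :
    |physPartialDeriv w t x R| ≤ 150 * t ^ (-(2 / 3 : ℝ)) *
      jap (|x| / t ^ (1 / 3 : ℝ)) ^ (1 / 4 : ℝ) * (A + t ^ (-(1 / 6 : ℝ)) * dL2 w) := by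
  rw [mul_assoc 150, ← inv_mul_zoneWidth ht]
  refine (abs_one_div_pi_mul_re_le _).trans ?_
  rw [norm_mul, Complex.norm_I, one_mul]
  exact hw.norm_integral_id_mul_osc_mul_le ht hR

lemma hasDerivAt_integral_osc_mul (hw : IsProfile w A) (t x : ℝ) (hR : 0 ≤ R) :
    HasDerivAt (fun x => ∫ p in 0..R, osc t x p * w p)
      (Complex.I * ∫ p in 0..R, p * (osc t x p * w p)) x := by
  have hosc (x : ℝ) : IntegrableOn (fun p => osc t x p * w p) (Ioc 0 R) := by
    simpa only [Complex.ofReal_one, one_mul] using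
      hw.integrableOn_mul_osc_mul (m := fun _ => 1) continuous_const t x R
  simp only [intervalIntegral.integral_of_le hR, ← integral_const_mul]
  refine (hasDerivAt_integral_of_dominated_loc_of_deriv_le
    (F' := fun x p => Complex.I * (p * (osc t x p * w p))) (bound := fun _ => R * A) univ_mem
    (Eventually.of_forall fun y => (hosc y).aestronglyMeasurable) (hosc x)
    ((hw.integrableOn_mul_osc_mul continuous_id t x R).aestronglyMeasurable.const_mul _) ?_
    (integrable_const _) ?_).2
  · filter_upwards [ae_restrict_mem measurableSet_Ioc] with p hp y _
    rw [norm_mul, norm_mul, norm_mul, norm_osc, one_mul, Complex.norm_I, one_mul,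
      Complex.norm_real, Real.norm_eq_abs, abs_of_pos hp.1]
    exact mul_le_mul hp.2 (hw.norm_le p hp.1) (norm_nonneg _) hR
  · refine Eventually.of_forall fun p y _ => ?_
    exact ((hasDerivAt_osc t y p).mul_const (w p)).congr_deriv (by ring)

lemma hasDerivAt_physPartial (hw : IsProfile w A) (t x : ℝ) (hR : 0 ≤ R) :
    HasDerivAt (fun x => physPartial w t x R) (physPartialDeriv w t x R) x := by
  simp only [physPartial_eq w t _ hR]
  exact (Complex.reCLM.hasFDerivAt.comp_hasDerivAt x
    (hw.hasDerivAt_integral_osc_mul t x hR)).const_mul _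

lemma dist_physPartialDeriv_le (hw : IsProfile w A) (ht : 0 < t) {S R' : ℝ}
    (hS : freqScale t x ≤ S) (hR : S < R) (hRR' : R ≤ R') :
    dist (physPartialDeriv w t x R) (physPartialDeriv w t x R') ≤
      2 / t * (3 * (R - S)⁻¹ * A + (√(R - S))⁻¹ * dL2 w) := by
  have hσ := freqScale_nonneg t x
  have hstat := statPoint_le_freqScale (x := x) ht.le
  have hint {c : ℝ} (hc : 0 ≤ c) :
      IntervalIntegrable (fun p : ℝ => p * (osc t x p * w p)) volume 0 c :=
    (intervalIntegrable_iff_integrableOn_Ioc_of_le hc).2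
      (hw.integrableOn_mul_osc_mul continuous_id t x c)
  rw [dist_comm, Real.dist_eq, physPartialDeriv, physPartialDeriv, ← mul_sub, ← Complex.sub_re,
    ← mul_sub, intervalIntegral.integral_interval_sub_left (hint (by linarith))
      (hint (by linarith))]
  refine (abs_one_div_pi_mul_re_le _).trans ?_
  rw [norm_mul, Complex.norm_I, one_mul, ← mul_one (2 : ℝ)]
  refine hw.norm_integral_far_le ht contDiff_id (by linarith) hRR' (by linarith)
    (fun p hp => le_abs.2 (.inl (by linarith [hp.1]))) (fun p hp => ?_) (fun p _ => ?_)
  · rw [id, abs_of_nonneg (by linarith [hp.1])]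
    linarith
  · rw [deriv_id, abs_one]

lemma uniformCauchySeqOn_physPartialDeriv (hw : IsProfile w A) (ht : 0 < t) (M : ℝ) :
    UniformCauchySeqOn (fun R x => physPartialDeriv w t x R) atTop (Metric.ball 0 M) := by
  have hsub : Tendsto (fun R => R - √(M / (3 * t))) atTop atTop :=
    tendsto_atTop_add_const_right _ _ tendsto_id
  have hinv := ((tendsto_inv_atTop_zero.comp hsub).const_mul 3).mul_const A
  have hsqrt := (tendsto_inv_atTop_zero.comp (Real.tendsto_sqrt_atTop.comp hsub)).mul_const (dL2 w)
  have hbound := (hinv.add hsqrt).const_mul (2 / t)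
  simp only [mul_zero, zero_mul, add_zero] at hbound
  refine uniformCauchySeqOn_of_dist_le hbound ?_
  filter_upwards [eventually_gt_atTop √(M / (3 * t))] with R hR R' hRR' x hx
  refine hw.dist_physPartialDeriv_le ht ?_ hR hRR'
  rw [mem_ball_zero_iff, Real.norm_eq_abs] at hx
  exact Real.sqrt_le_sqrt (by gcongr)

lemma exists_tendsto_physPartialDeriv (hw : IsProfile w A) (ht : 0 < t) (x : ℝ) :
    ∃ l, Tendsto (physPartialDeriv w t x) atTop (𝓝 l) :=
  cauchySeq_tendsto_of_complete <|
    (hw.uniformCauchySeqOn_physPartialDeriv ht (|x| + 1)).cauchySeq <| by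
      rw [mem_ball_zero_iff, Real.norm_eq_abs]
      exact lt_add_one _

lemma hasDerivAt_of_isPhys (hw : IsProfile w A) (ht : 0 < t) (hu : IsPhys w t u)
    (hv : ∀ x, Tendsto (physPartialDeriv w t x) atTop (𝓝 (v x))) (x : ℝ) :
    HasDerivAt u (v x) x := by
  refine hasDerivAt_of_tendstoLocallyUniformlyOn (l := atTop)
    (f := fun R x => physPartial w t x R) (f' := fun R x => physPartialDeriv w t x R)
    (Metric.isOpen_ball (x := (0 : ℝ)) (ε := |x| + 1)) ?_ ?_ (fun y _ => hu y) ?_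
  · exact ((hw.uniformCauchySeqOn_physPartialDeriv ht _).tendstoUniformlyOn_of_tendsto
      fun y _ => hv y).tendstoLocallyUniformlyOn
  · filter_upwards [eventually_ge_atTop 0] with R hR y _
    exact hw.hasDerivAt_physPartial t y hR
  · rw [mem_ball_zero_iff, Real.norm_eq_abs]
    exact lt_add_one _

end IsProfile

end PhysicalSpace

theorem decay_estimates_general {w : ℝ → ℂ} {A t : ℝ} (hw : IsProfile w A) (ht : 0 < t)
    {u : ℝ → ℝ} (hu : IsPhys w t u) :
    Differentiable ℝ u ∧
    (∀ x, |u x| ≤ 150 * t ^ (-(1 / 3 : ℝ)) * jap (|x| / t ^ (1 / 3 : ℝ)) ^ (-(1 / 4 : ℝ)) *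
      (A + t ^ (-(1 / 6 : ℝ)) * dL2 w)) ∧
    (∀ x, |deriv u x| ≤ 150 * t ^ (-(2 / 3 : ℝ)) * jap (|x| / t ^ (1 / 3 : ℝ)) ^ (1 / 4 : ℝ) *
      (A + t ^ (-(1 / 6 : ℝ)) * dL2 w)) := by
  choose v hv using hw.exists_tendsto_physPartialDeriv ht
  have hderiv := hw.hasDerivAt_of_isPhys ht hu hv
  refine ⟨fun x => (hderiv x).differentiableAt, fun x => ?_, fun x => ?_⟩
  · exact le_of_tendsto (hu x).abs
      ((eventually_ge_atTop _).mono fun R hR => hw.abs_physPartial_le ht hR)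
  · rw [(hderiv x).deriv]
    exact le_of_tendsto (hv x).abs
      ((eventually_ge_atTop _).mono fun R hR => hw.abs_physPartialDeriv_le ht hR)

/-- decay estimates for functions with profile in `L^∞ ∩ Ḣ¹((0,∞))`. -/
theorem decay_estimates :
    ∃ C : ℝ, 0 < C ∧
    ∀ t : ℝ, 0 < t → ∀ w : ℝ → ℂ, MemE w →
    ∀ u : ℝ → ℝ, IsPhys w t u →
      Continuous u ∧
      (∀ x : ℝ,
        |u x| ≤ C * t ^ (-(1 / 3 : ℝ)) * jap (|x| / t ^ (1 / 3 : ℝ)) ^ (-(1 / 4 : ℝ)) *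
          EnormP t w) ∧
      (∀ x : ℝ,
        |deriv u x| ≤ C * t ^ (-(2 / 3 : ℝ)) * jap (|x| / t ^ (1 / 3 : ℝ)) ^ (1 / 4 : ℝ) *
          EnormP t w) := by
  refine ⟨150, by norm_num, fun t ht w hw u hu => ?_⟩
  have h := decay_estimates_general hw.isProfile ht hu
  exact ⟨h.1.continuous, h.2⟩

end MKdVPaper
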